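/- Let n > q ≥ 2 and 0 ≤ k ≤ q+1, with ε_j = 1 for 1 ≤ j ≤ k and ε_j = −1 for k < j ≤ q+1, and let J be the (q+1)×(q+1) diagonal matrix J = diag(ε₁,…,ε_{q+1}). For each increasing multi-index 1 ≤ i₁ < ⋯ < i_{q−1} ≤ q+1 let X_{i₁…i_{q−1}} be the linear vector field (e*_{i₁} ∧ ⋯ ∧ e*_{i_{q−1}}) ⌟ Π_{k,q} on ℝⁿ. Each X_{i₁…i_{q−1}} depends only on the variables x₁,…,x_{q+1} and takes values in the span of e₁,…,e_{q+1}, hence is identified with a matrix in gl(q+1, ℝ). Then the real linear span g of these matrices is a Lie subalgebra of gl(q+1, ℝ) under the commutator bracket, and g is isomorphic as a real Lie algebra to so(k, q+1−k) = {A ∈ gl(q+1, ℝ) : Aᵀ J + J A = 0}. -/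

import Mathlib

open scoped ContDiff

namespace NambuLin

/-- Index set for the standard basis of the `q`-th exterior power of `ℝⁿ`:
increasing multi-indices, encoded as `q`-element subsets of `Fin n`. -/
abbrev Idx (n q : ℕ) := {s : Finset (Fin n) // s.card = q}

/-- A `q`-vector of `ℝⁿ`, given by its coordinates in the standard basis
`{e_{i₁} ∧ ⋯ ∧ e_{i_q}}` of `⋀^q(ℝⁿ)`. -/
abbrev MultiVec (n q : ℕ) := Idx n q → ℝ

/-- The Jacobian matrix of a map `φ : ℝⁿ → ℝⁿ` at a point `x`. -/
noncomputable def jac {n : ℕ} (φ : (Fin n → ℝ) → (Fin n → ℝ)) (x : Fin n → ℝ) :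
    Matrix (Fin n) (Fin n) ℝ :=
  Matrix.of fun i j => fderiv ℝ φ x (Pi.single j 1) i

/-- The `q`-th exterior power `⋀^q A` of a matrix `A`, acting on `q`-vectors in
coordinates: `((⋀^q A) w)_J = ∑_I det(A[J,I]) w_I`. -/
noncomputable def extPow (n q : ℕ) (A : Matrix (Fin n) (Fin n) ℝ) (w : MultiVec n q) :
    MultiVec n q :=
  fun J => ∑ I : Idx n q,
    (A.submatrix (J.1.orderEmbOfFin J.2) (I.1.orderEmbOfFin I.2)).det * w I

/-- The constant `q`-vector `e₁ ∧ ⋯ ∧ e_q` in coordinates. -/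
def stdVec (n q : ℕ) : MultiVec n q :=
  fun J => if (J : Finset (Fin n)) = Finset.univ.filter (fun i : Fin n => (i : ℕ) < q) then 1 else 0

/-- `φ` is a `C^∞` diffeomorphism from the open set `W` onto the open set `φ '' W`. -/
def IsSmoothDiffeoOn {n : ℕ} (φ : (Fin n → ℝ) → (Fin n → ℝ)) (W : Set (Fin n → ℝ)) : Prop :=
  IsOpen W ∧ IsOpen (φ '' W) ∧ ContDiffOn ℝ ∞ φ W ∧
    ∃ ψ : (Fin n → ℝ) → (Fin n → ℝ), ContDiffOn ℝ ∞ ψ (φ '' W) ∧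
      (∀ x ∈ W, ψ (φ x) = x) ∧ (∀ y ∈ φ '' W, φ (ψ y) = y)

/-- `P` is a (smooth) Nambu structure of order `q` on `U`: it is a smooth `q`-vector
field, and around every point where it does not vanish there is a local `C^∞`
coordinate system in which it becomes the constant `q`-vector `e₁ ∧ ⋯ ∧ e_q`. -/
def IsNambu (n q : ℕ) (P : (Fin n → ℝ) → MultiVec n q) (U : Set (Fin n → ℝ)) : Prop :=
  ContDiffOn ℝ ∞ P U ∧
    ∀ p ∈ U, P p ≠ 0 →
      ∃ W, p ∈ W ∧ W ⊆ U ∧ ∃ φ, IsSmoothDiffeoOn φ W ∧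
        ∀ x ∈ W, extPow n q (jac φ x) (P x) = stdVec n q

/-- The signs `ε_j` (`= 1` for the first `k` indices, `= -1` afterwards;
`0`-based indexing, so `ε_j = 1` iff `j < k`). -/
def eps {n : ℕ} (k : ℕ) (j : Fin n) : ℝ := if (j : ℕ) < k then 1 else -1

/-- The set of indices `{1, …, q+1}` (in `0`-based form: `{0,…,q}`). -/
def topIdx (n q : ℕ) : Finset (Fin n) := Finset.univ.filter (fun i : Fin n => (i : ℕ) < q + 1)

/-- The nondegenerate Type 1 linear Nambu structure `Π_{k,q}` of order `q` and
signature `(k, q+1-k)`: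
`Π_{k,q}(x) = ∑_{j=1}^{q+1} (−1)^{j−1} ε_j x_j e₁ ∧ ⋯ ∧ ê_j ∧ ⋯ ∧ e_{q+1}`
(here written with `0`-based indices `j`, whence the sign `(−1)^j`). -/
def modelPi (n q k : ℕ) (x : Fin n → ℝ) : MultiVec n q :=
  fun J => ∑ j : Fin n,
    if ((j : ℕ) < q + 1 ∧ (J : Finset (Fin n)) = (topIdx n q).erase j)
    then (-1 : ℝ) ^ (j : ℕ) * eps k j * x j else 0

/-- The shuffle sign `(−1)^{#{(s,t) ∈ S × K : s > t}}`: for disjoint increasing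
multi-indices `S, K` one has `e*_S ∧ e*_K = shufSign S K · e*_{S ∪ K}`. -/
def shufSign {n : ℕ} (S K : Finset (Fin n)) : ℝ :=
  (-1 : ℝ) ^ (((S ×ˢ K).filter fun p : Fin n × Fin n => p.2 < p.1).card)

/-- The contraction `e*_S ⌟ w` of a `q`-vector `w` with the basis covector
`e*_S = e*_{s₁} ∧ ⋯ ∧ e*_{s_r}` (`S = {s₁ < ⋯ < s_r}`, `r = q - m`), determined by
`⟨e*_K, e*_S ⌟ w⟩ = ⟨e*_S ∧ e*_K, w⟩`: its `K`-th coordinate is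
`shufSign S K · w_{S ∪ K}` when `S, K` are disjoint (and `0` otherwise, in
accordance with the graded pairing). -/
def contr (n q m : ℕ) (S : Finset (Fin n)) (w : MultiVec n q) : MultiVec n m :=
  fun K => if h : Disjoint S (K : Finset (Fin n)) ∧ (S ∪ (K : Finset (Fin n))).card = q
    then shufSign S K.1 * w ⟨S ∪ K.1, h.2⟩ else 0

/-- The inclusion `Fin (q+1) → Fin n` on the first `q+1` indices. -/
def embQ (n q : ℕ) (h : q + 1 ≤ n) (i : Fin (q + 1)) : Fin n :=
  ⟨(i : ℕ), lt_of_lt_of_le i.isLt h⟩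

/-- The matrix in `gl(q+1, ℝ)` of the linear vector field
`X_S = e*_S ⌟ Π_{k,q}` (which depends only on `x₁,…,x_{q+1}` and takes values in
the span of `e₁,…,e_{q+1}`): its `(i,j)` entry is the `e_i`-coefficient of
`X_S(e_j)`. -/
def matOf (n q k : ℕ) (h : q + 1 ≤ n) (S : Finset (Fin n)) :
    Matrix (Fin (q + 1)) (Fin (q + 1)) ℝ :=
  Matrix.of fun i j =>
    contr n q 1 S (modelPi n q k (Pi.single (embQ n q h j) 1))
      ⟨{embQ n q h i}, Finset.card_singleton _⟩

lemma modelPi_single (n q k : ℕ) (j : Fin n) (hj : (j : ℕ) < q + 1) (J : Idx n q) :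
    modelPi n q k (Pi.single j 1) J =
      if (J : Finset (Fin n)) = (topIdx n q).erase j then (-1 : ℝ) ^ (j : ℕ) * eps k j else 0 := by
  unfold modelPi
  rw [Finset.sum_eq_single j]
  · simp [hj]
  · intro b _ hb
    simp [hb]
  · simp

lemma card_topIdx (n q : ℕ) (h : q + 1 ≤ n) : (topIdx n q).card = q + 1 := by
  have : topIdx n q = (Finset.univ : Finset (Fin (q+1))).map (Fin.castLEEmb h) := by
    ext i
    simp only [topIdx, Finset.mem_filter, Finset.mem_univ, true_and, Finset.mem_map]
    constructor
    · intro hi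
      exact ⟨⟨i, hi⟩, by ext; simp⟩
    · rintro ⟨a, rfl⟩
      exact a.isLt
  rw [this]; simp

lemma mem_topIdx {n q : ℕ} {i : Fin n} : i ∈ topIdx n q ↔ (i : ℕ) < q + 1 := by
  simp [topIdx]

lemma card_gt (n q : ℕ) (h : q + 1 ≤ n) (i : Fin n) :
    ((topIdx n q).filter (fun s => i < s)).card = q - i := by
  have : ((topIdx n q).filter (fun s => i < s)).card = (Finset.Ioo (i : ℕ) (q+1)).card := by
    apply Finset.card_bij (fun (s : Fin n) _ => (s : ℕ))
    · intro s hs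
      simp [mem_topIdx] at hs ⊢
      omega
    · intro a _ b _ hab
      exact Fin.ext hab
    · intro b hb
      simp at hb
      exact ⟨⟨b, by omega⟩, by
        rw [Finset.mem_filter, mem_topIdx]
        exact ⟨by simp only; omega, Fin.lt_def.2 hb.1⟩, rfl⟩
  rw [this, Nat.card_Ioo]; omega

lemma shuf_single {n : ℕ} (S : Finset (Fin n)) (i : Fin n) :
    shufSign S {i} = (-1 : ℝ) ^ ((S.filter (fun s => i < s)).card) := by
  unfold shufSign
  congr 1
  apply Finset.card_bij (fun p _ => p.1)
  · rintro ⟨a, b⟩ h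
    simp at h ⊢
    obtain ⟨⟨h1, rfl⟩, h2⟩ := h
    exact ⟨h1, h2⟩
  · rintro ⟨a, b⟩ h ⟨c, d⟩ h' e
    simp at h h' e ⊢
    refine ⟨e, ?_⟩
    rw [← h.1.2, ← h'.1.2]
  · intro b hb
    simp at hb
    exact ⟨(b, i), by simpa using hb, rfl⟩

lemma eq_erase2 (n q : ℕ) (hq : 2 ≤ q) (h : q + 1 ≤ n) (S : Finset (Fin n)) (hc : S.card = q - 1)
    (hS : S ⊆ topIdx n q) (i j : Fin n) (hi : (i : ℕ) < q + 1) (hj : (j : ℕ) < q + 1)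
    (hiS : i ∉ S) (hjS : j ∉ S) (hij : i ≠ j) : S = ((topIdx n q).erase i).erase j := by
  apply Finset.eq_of_subset_of_card_le
  · intro s hs
    simp only [Finset.mem_erase]
    exact ⟨fun e => hjS (e ▸ hs), fun e => hiS (e ▸ hs), hS hs⟩
  · rw [Finset.card_erase_of_mem, Finset.card_erase_of_mem, card_topIdx n q h, hc]
    · omega
    · exact mem_topIdx.2 hi
    · exact Finset.mem_erase.2 ⟨hij.symm, mem_topIdx.2 hj⟩

lemma shuf_lt (n q : ℕ) (h : q + 1 ≤ n) (i j : Fin n)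
    (hj : (j : ℕ) < q + 1) (hij : i < j) :
    (-1 : ℝ) ^ (j : ℕ) * shufSign (((topIdx n q).erase i).erase j) {i} +
    (-1 : ℝ) ^ (i : ℕ) * shufSign (((topIdx n q).erase i).erase j) {j} = 0 := by
  have hl : (i : ℕ) < j := hij
  rw [shuf_single, shuf_single]
  have e1 : ((((topIdx n q).erase i).erase j).filter (fun s => i < s)) =
      ((topIdx n q).filter (fun s => i < s)).erase j := by
    ext s
    simp only [Finset.mem_filter, Finset.mem_erase]
    constructor
    · rintro ⟨⟨a, b, c⟩, d⟩; exact ⟨a, c, d⟩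
    · rintro ⟨a, c, d⟩; exact ⟨⟨a, d.ne', c⟩, d⟩
  have e2 : ((((topIdx n q).erase i).erase j).filter (fun s => j < s)) =
      ((topIdx n q).filter (fun s => j < s)) := by
    ext s
    simp only [Finset.mem_filter, Finset.mem_erase]
    constructor
    · rintro ⟨⟨a, b, c⟩, d⟩; exact ⟨c, d⟩
    · rintro ⟨c, d⟩; exact ⟨⟨d.ne', (hij.trans d).ne', c⟩, d⟩
  rw [e1, e2, Finset.card_erase_of_mem, card_gt n q h, card_gt n q h, ← pow_add, ← pow_add]
  · obtain ⟨d, hd⟩ : ∃ d, (j : ℕ) = i + d + 1 := ⟨j - i - 1, by omega⟩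
    obtain ⟨r, hr⟩ : ∃ r, q = i + d + 1 + r := ⟨q - (i + d + 1), by omega⟩
    have a1 : (j : ℕ) + (q - i - 1) = (i + r) + 2 * d + 1 := by omega
    have a2 : (i : ℕ) + (q - j) = i + r := by omega
    rw [a1, a2, pow_succ, pow_add, pow_mul]
    simp
  · simp [mem_topIdx, hij, hj]

lemma shuf_ne (n q : ℕ) (hq : 2 ≤ q) (h : q + 1 ≤ n) (S : Finset (Fin n)) (hc : S.card = q - 1)
    (hS : S ⊆ topIdx n q) (i j : Fin n) (hi : (i : ℕ) < q + 1) (hj : (j : ℕ) < q + 1)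
    (hiS : i ∉ S) (hjS : j ∉ S) (hij : i ≠ j) :
    (-1 : ℝ) ^ (j : ℕ) * shufSign S {i} + (-1 : ℝ) ^ (i : ℕ) * shufSign S {j} = 0 := by
  rcases lt_or_gt_of_ne hij with hl | hl
  · rw [eq_erase2 n q hq h S hc hS i j hi hj hiS hjS hij]
    exact shuf_lt n q h i j hj hl
  · rw [eq_erase2 n q hq h S hc hS j i hj hi hjS hiS hij.symm, add_comm]
    exact shuf_lt n q h j i hi hl

lemma matOf_apply (n q k : ℕ) (hq : 2 ≤ q) (h : q + 1 ≤ n) (S : Finset (Fin n))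
    (hc : S.card = q - 1) (hS : S ⊆ topIdx n q) (i j : Fin (q + 1)) :
    matOf n q k h S i j =
      if embQ n q h i ∉ S ∧ embQ n q h j ∉ S ∧ embQ n q h i ≠ embQ n q h j then
        shufSign S {embQ n q h i} * ((-1 : ℝ) ^ (j : ℕ) * (if (j : ℕ) < k then (1 : ℝ) else -1))
      else 0 := by
  have hi : ((embQ n q h i : Fin n) : ℕ) < q + 1 := i.isLt
  have hj : ((embQ n q h j : Fin n) : ℕ) < q + 1 := j.isLt
  have hjv : ((embQ n q h j : Fin n) : ℕ) = j := rfl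
  have hev : eps k (embQ n q h j) = if (j : ℕ) < k then (1 : ℝ) else -1 := rfl
  simp only [matOf, Matrix.of_apply, contr]
  rw [← hev, ← hjv]
  generalize embQ n q h i = a at *
  generalize embQ n q h j = b at *
  by_cases haS : a ∈ S
  · simp [haS]
  have hcard : (S ∪ {a}).card = q := by
    rw [Finset.card_union_of_disjoint (by simpa using haS)]
    simp [hc]; omega
  rw [dif_pos ⟨by simpa using haS, hcard⟩, modelPi_single n q k b hj]
  have key : (S ∪ {a} = (topIdx n q).erase b) ↔ (b ∉ S ∧ a ≠ b) := by
    constructor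
    · intro e
      have hb : b ∉ S ∪ {a} := by rw [e]; simp
      simp only [Finset.mem_union, Finset.mem_singleton, not_or] at hb
      exact ⟨hb.1, fun e => hb.2 e.symm⟩
    · rintro ⟨h1, h2⟩
      apply Finset.eq_of_subset_of_card_le
      · intro s hs
        rw [Finset.mem_union, Finset.mem_singleton] at hs
        rw [Finset.mem_erase]
        rcases hs with hs | rfl
        · exact ⟨fun e => h1 (e ▸ hs), hS hs⟩
        · exact ⟨h2, mem_topIdx.2 hi⟩
      · rw [Finset.card_erase_of_mem (mem_topIdx.2 hj), card_topIdx n q h, hcard]; simp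
  simp only [key, haS, not_false_eq_true, true_and, mul_ite, mul_zero]

lemma so_iff (q k : ℕ) (A : Matrix (Fin (q + 1)) (Fin (q + 1)) ℝ) :
    (A.transpose * (Matrix.diagonal fun j : Fin (q + 1) => if (j : ℕ) < k then (1 : ℝ) else -1) +
      (Matrix.diagonal fun j : Fin (q + 1) => if (j : ℕ) < k then (1 : ℝ) else -1) * A = 0) ↔
    ∀ i j : Fin (q + 1), A j i * (if (j : ℕ) < k then (1 : ℝ) else -1) +
      (if (i : ℕ) < k then (1 : ℝ) else -1) * A i j = 0 := by
  rw [← Matrix.ext_iff]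
  simp only [Matrix.add_apply, Matrix.mul_diagonal, Matrix.diagonal_mul, Matrix.transpose_apply,
    Matrix.zero_apply]

lemma embQ_inj (n q : ℕ) (h : q + 1 ≤ n) {i j : Fin (q + 1)} :
    embQ n q h i = embQ n q h j ↔ i = j := by
  simp [embQ, Fin.ext_iff]

lemma matOf_so (n q k : ℕ) (hq : 2 ≤ q) (h : q + 1 ≤ n) (S : Finset (Fin n))
    (hc : S.card = q - 1) (hS : S ⊆ topIdx n q) (i j : Fin (q + 1)) :
    matOf n q k h S j i * (if (j : ℕ) < k then (1 : ℝ) else -1) +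
      (if (i : ℕ) < k then (1 : ℝ) else -1) * matOf n q k h S i j = 0 := by
  rw [matOf_apply n q k hq h S hc hS, matOf_apply n q k hq h S hc hS]
  by_cases hh : embQ n q h i ∉ S ∧ embQ n q h j ∉ S ∧ embQ n q h i ≠ embQ n q h j
  · rw [if_pos hh, if_pos ⟨hh.2.1, hh.1, hh.2.2.symm⟩]
    have := shuf_ne n q hq h S hc hS (embQ n q h i) (embQ n q h j) i.isLt j.isLt hh.1 hh.2.1 hh.2.2
    have hiv : ((embQ n q h i : Fin n) : ℕ) = i := rfl
    have hjv : ((embQ n q h j : Fin n) : ℕ) = j := rfl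
    rw [hiv, hjv] at this
    linear_combination (if (i : ℕ) < k then (1 : ℝ) else -1) *
      (if (j : ℕ) < k then (1 : ℝ) else -1) * this
  · rw [if_neg hh, if_neg (fun h' => hh ⟨h'.2.1, h'.1, h'.2.2.symm⟩)]
    simp

lemma eps_ne (k i : ℕ) : (if i < k then (1 : ℝ) else -1) ≠ 0 := by
  split_ifs <;> norm_num

lemma pair_mem (n q k : ℕ) (hq : 2 ≤ q) (h : q + 1 ≤ n)
    (A : Matrix (Fin (q + 1)) (Fin (q + 1)) ℝ)
    (hA : ∀ i j : Fin (q + 1), A j i * (if (j : ℕ) < k then (1 : ℝ) else -1) +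
      (if (i : ℕ) < k then (1 : ℝ) else -1) * A i j = 0) (a b : Fin (q + 1)) :
    Matrix.single a b (A a b) + Matrix.single b a (A b a) ∈ Submodule.span ℝ
      {M | ∃ S : Finset (Fin n), S.card = q - 1 ∧ S ⊆ topIdx n q ∧ M = matOf n q k h S} := by
  by_cases hab : a = b
  · subst hab
    have h0 : A a a = 0 := by
      have h1 := hA a a
      have h2 : (2 * (if (a : ℕ) < k then (1 : ℝ) else -1)) * A a a = 0 := by linarith
      exact (mul_eq_zero.1 h2).resolve_left (mul_ne_zero two_ne_zero (eps_ne k a))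
    simp [h0]
  have hab' : embQ n q h a ≠ embQ n q h b := fun e => hab ((embQ_inj n q h).1 e)
  set S := ((topIdx n q).erase (embQ n q h a)).erase (embQ n q h b) with hSdef
  have ha : (embQ n q h a) ∈ topIdx n q := mem_topIdx.2 a.isLt
  have hb : (embQ n q h b) ∈ topIdx n q := mem_topIdx.2 b.isLt
  have hc : S.card = q - 1 := by
    rw [hSdef, Finset.card_erase_of_mem (Finset.mem_erase.2 ⟨hab'.symm, hb⟩),
      Finset.card_erase_of_mem ha, card_topIdx n q h]
    omega
  have hS : S ⊆ topIdx n q := (Finset.erase_subset _ _).trans (Finset.erase_subset _ _)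
  have hmemS : ∀ i : Fin (q + 1), embQ n q h i ∉ S ↔ (i = a ∨ i = b) := by
    intro i
    have hi : (embQ n q h i) ∈ topIdx n q := mem_topIdx.2 i.isLt
    simp only [hSdef, Finset.mem_erase, hi, ne_eq, embQ_inj]
    tauto
  have hne : matOf n q k h S a b ≠ 0 := by
    rw [matOf_apply n q k hq h S hc hS, if_pos ⟨(hmemS a).2 (Or.inl rfl), (hmemS b).2 (Or.inr rfl), hab'⟩]
    refine mul_ne_zero ?_ (mul_ne_zero ?_ (eps_ne k b))
    · unfold shufSign; exact pow_ne_zero _ (by norm_num)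
    · exact pow_ne_zero _ (by norm_num)
  have hz : ∀ i j, ¬ ((i = a ∧ j = b) ∨ (i = b ∧ j = a)) → matOf n q k h S i j = 0 := by
    intro i j hij
    rw [matOf_apply n q k hq h S hc hS, if_neg]
    rw [hmemS, hmemS, ne_eq, embQ_inj]
    rintro ⟨h1, h2, h3⟩
    rcases h1 with rfl | rfl <;> rcases h2 with rfl | rfl <;> simp_all
  have hM := matOf_so n q k hq h S hc hS a b
  have hA' := hA a b
  have heq : Matrix.single a b (A a b) + Matrix.single b a (A b a) =
      (A a b / matOf n q k h S a b) • matOf n q k h S := by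
    ext i j
    rw [Matrix.smul_apply, smul_eq_mul, Matrix.add_apply, Matrix.single_apply, Matrix.single_apply]
    by_cases h1 : a = i ∧ b = j
    · obtain ⟨rfl, rfl⟩ := h1
      rw [if_pos ⟨rfl, rfl⟩, if_neg (fun e => hab e.2)]
      field_simp
      simp
    · by_cases h2 : b = i ∧ a = j
      · obtain ⟨rfl, rfl⟩ := h2
        rw [if_neg h1, if_pos ⟨rfl, rfl⟩]
        field_simp
        apply mul_right_cancel₀ (eps_ne k b)
        linear_combination matOf n q k h S a b * hA' - A a b * hM
      · rw [if_neg h1, if_neg h2, hz i j]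
        · simp
        · rintro (⟨rfl, rfl⟩ | ⟨rfl, rfl⟩)
          · exact h1 ⟨rfl, rfl⟩
          · exact h2 ⟨rfl, rfl⟩
  rw [heq]
  exact Submodule.smul_mem _ _ (Submodule.subset_span ⟨S, hc, hS, rfl⟩)

lemma mem_span_iff (n q k : ℕ) (hq : 2 ≤ q) (h : q + 1 ≤ n)
    (A : Matrix (Fin (q + 1)) (Fin (q + 1)) ℝ) :
    A ∈ Submodule.span ℝ
      {M | ∃ S : Finset (Fin n), S.card = q - 1 ∧ S ⊆ topIdx n q ∧ M = matOf n q k h S} ↔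
    ∀ i j : Fin (q + 1), A j i * (if (j : ℕ) < k then (1 : ℝ) else -1) +
      (if (i : ℕ) < k then (1 : ℝ) else -1) * A i j = 0 := by
  constructor
  · intro hA
    induction hA using Submodule.span_induction with
    | mem x hx =>
      obtain ⟨S, hc, hS, rfl⟩ := hx
      exact matOf_so n q k hq h S hc hS
    | zero => simp
    | add x y _ _ hx hy =>
      intro i j
      rw [Matrix.add_apply, Matrix.add_apply]
      linear_combination hx i j + hy i j
    | smul c x _ hx =>
      intro i j
      rw [Matrix.smul_apply, Matrix.smul_apply, smul_eq_mul, smul_eq_mul]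
      linear_combination c * hx i j
  · intro hA
    have e : A = (1 / 2 : ℝ) • ∑ a, ∑ b,
        (Matrix.single a b (A a b) + Matrix.single b a (A b a)) := by
      simp only [Finset.sum_add_distrib]
      rw [Finset.sum_comm (f := fun a b => Matrix.single b a (A b a)),
        ← Matrix.matrix_eq_sum_single A, ← two_smul ℝ A, smul_smul]
      norm_num
    rw [e]
    exact Submodule.smul_mem _ _ (Submodule.sum_mem _ fun a _ => Submodule.sum_mem _ fun b _ =>
      pair_mem n q k hq h A hA a b)

/-- the Lie algebra appearing in Section 3 of the paper. The
linear vector fields `X_{i₁…i_{q−1}} = (e*_{i₁} ∧ ⋯ ∧ e*_{i_{q−1}}) ⌟ Π_{k,q}`,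
`1 ≤ i₁ < ⋯ < i_{q−1} ≤ q+1`, depend only on `x₁,…,x_{q+1}` and take values in the
span of `e₁,…,e_{q+1}`; identified with matrices in `gl(q+1,ℝ)`, their span `g` is
closed under the commutator bracket and is isomorphic, as a real Lie algebra, to
`so(k, q+1−k) = {A : Aᵀ J + J A = 0}`, `J = diag(ε₁,…,ε_{q+1})`. -/
theorem span_isomorphic_so (n q k : ℕ) (hq : 2 ≤ q) (hn : q < n) (hk : k ≤ q + 1)
    (hn' : q + 1 ≤ n)
    (Jm : Matrix (Fin (q + 1)) (Fin (q + 1)) ℝ)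
    (hJ : Jm = Matrix.diagonal fun j : Fin (q + 1) => if (j : ℕ) < k then (1 : ℝ) else -1)
    (g : Submodule ℝ (Matrix (Fin (q + 1)) (Fin (q + 1)) ℝ))
    (hg : g = Submodule.span ℝ
      {M | ∃ S : Finset (Fin n), S.card = q - 1 ∧ S ⊆ topIdx n q ∧ M = matOf n q k hn' S}) :
    -- each `X_S` takes values in the span of `e₁,…,e_{q+1}` …
    (∀ S : Finset (Fin n), S.card = q - 1 → S ⊆ topIdx n q →
      ∀ (x : Fin n → ℝ) (i : Fin n), q + 1 ≤ (i : ℕ) →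
        contr n q 1 S (modelPi n q k x) ⟨{i}, Finset.card_singleton _⟩ = 0) ∧
    -- … and depends only on the variables `x₁,…,x_{q+1}`,
    (∀ S : Finset (Fin n), S.card = q - 1 → S ⊆ topIdx n q →
      ∀ x y : Fin n → ℝ, (∀ j : Fin n, (j : ℕ) < q + 1 → x j = y j) →
        contr n q 1 S (modelPi n q k x) = contr n q 1 S (modelPi n q k y)) ∧
    -- `g` is a Lie subalgebra of `gl(q+1,ℝ)`,
    (∀ A ∈ g, ∀ B ∈ g, A * B - B * A ∈ g) ∧
    -- and `g` is isomorphic as a real Lie algebra to `so(k, q+1-k)`.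
    ∃ T : Matrix (Fin (q + 1)) (Fin (q + 1)) ℝ →ₗ[ℝ] Matrix (Fin (q + 1)) (Fin (q + 1)) ℝ,
      Set.InjOn T (g : Set (Matrix (Fin (q + 1)) (Fin (q + 1)) ℝ)) ∧
      T '' (g : Set (Matrix (Fin (q + 1)) (Fin (q + 1)) ℝ)) =
        {A | A.transpose * Jm + Jm * A = 0} ∧
      ∀ A ∈ g, ∀ B ∈ g, T (A * B - B * A) = T A * T B - T B * T A := by
  have hmem : ∀ A, A ∈ g ↔ A.transpose * Jm + Jm * A = 0 := by
    intro A
    rw [hg, hJ, so_iff, mem_span_iff n q k hq hn']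
  refine ⟨?_, ?_, ?_, LinearMap.id, ?_, ?_, ?_⟩
  · intro S _ _ x i hi
    unfold contr
    split_ifs with h
    · have : modelPi n q k x ⟨S ∪ {i}, h.2⟩ = 0 := by
        unfold modelPi
        apply Finset.sum_eq_zero
        intro j _
        rw [if_neg]
        rintro ⟨_, e⟩
        have h1 : i ∈ (topIdx n q).erase j := by
          rw [← e]; simp
        have := mem_topIdx.1 (Finset.mem_of_mem_erase h1)
        omega
      exact mul_eq_zero_of_right _ this
    · rfl
  · intro S _ _ x y hxy
    have : modelPi n q k x = modelPi n q k y := by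
      funext J
      unfold modelPi
      apply Finset.sum_congr rfl
      intro j _
      split_ifs with h
      · rw [hxy j h.1]
      · rfl
    rw [this]
  · intro A hA B hB
    rw [hmem] at hA hB ⊢
    have hA' := eq_neg_of_add_eq_zero_left hA
    have hB' := eq_neg_of_add_eq_zero_left hB
    rw [Matrix.transpose_sub, Matrix.transpose_mul, Matrix.transpose_mul, sub_mul, mul_assoc, hA',
      mul_assoc, hB', mul_neg, mul_neg, ← mul_assoc, ← mul_assoc, hA', hB']
    noncomm_ring
  · exact fun _ _ _ _ h => h
  · ext A
    simp [hmem]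
  · intro A _ B _
    rfl

end NambuLin
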